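/- Suppose (B_i)_{i ∈ I} is a family of pairwise disjoint nonempty Borel subsets of ℝ whose union is ℝ, and each B_i is closed under both addition and multiplication. Then either every B_i has Lebesgue measure zero and is meager, or there exists i₁ ∈ I with B_{i₁} = ℝ. -/

import Mathlib

open MeasureTheory Set Filter Topology
open scoped Pointwise

/-- A Borel set of reals of positive measure meets some reflection `c - s` of itself in positive
measure. -/
theorem exists_volume_inter_reflection_ne_zero {s : Set ℝ} (hs : MeasurableSet s)
    (h : volume s ≠ 0) : ∃ c : ℝ, volume (s ∩ (fun x => c - x) ⁻¹' s) ≠ 0 := by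
  by_contra! hc
  have hmeas : MeasurableSet {p : ℝ × ℝ | ¬(p.2 ∈ s ∧ p.1 - p.2 ∈ s)} :=
    ((measurable_snd hs).inter ((measurable_fst.sub measurable_snd) hs)).compl
  have hae : ∀ᵐ c : ℝ, ∀ᵐ x : ℝ, ¬(x ∈ s ∧ c - x ∈ s) :=
    ae_of_all _ fun c => measure_eq_zero_iff_ae_notMem.1 (hc c)
  rw [Measure.ae_ae_comm hmeas] at hae
  refine h (measure_eq_zero_iff_ae_notMem.2 ?_)
  filter_upwards [hae] with x hx hxs
  refine h ?_
  have h0 : volume ((fun c => c - x) ⁻¹' s) = 0 := by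
    refine measure_eq_zero_iff_ae_notMem.2 ?_
    filter_upwards [hx] with c hc hcs using hc ⟨hxs, hcs⟩
  simpa [sub_eq_add_neg, measure_preimage_add_right] using h0

/-- **Steinhaus theorem** for sums: if `s` is a Borel set of positive measure, then `s + s` has
nonempty interior. -/
theorem interior_add_self_nonempty_of_volume_ne_zero {s : Set ℝ} (hs : MeasurableSet s)
    (h : volume s ≠ 0) : (interior (s + s)).Nonempty := by
  obtain ⟨c, hc⟩ := exists_volume_inter_reflection_ne_zero hs h
  set t := s ∩ (fun x => c - x) ⁻¹' s
  have htm : MeasurableSet t := hs.inter ((measurable_const.sub measurable_id) hs)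
  have hnhds := Measure.sub_mem_nhds_zero_of_addHaar_pos volume t htm (pos_iff_ne_zero.2 hc)
  refine ⟨c, mem_interior_iff_mem_nhds.2 ?_⟩
  have hcont : Tendsto (fun y : ℝ => y - c) (𝓝 c) (𝓝 0) :=
    (continuous_id.sub continuous_const).tendsto' _ _ (sub_self c)
  filter_upwards [hcont hnhds] with y hy
  obtain ⟨a, ha, b, hb, hab⟩ := hy
  exact ⟨a, ha.1, c - b, hb.2, by simp only at hab ⊢; linarith⟩

/-- **Pettis theorem** for sums: if `s` is a nonmeager Borel set, then `s + s` has nonempty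
interior. -/
theorem interior_add_self_nonempty_of_not_isMeagre {s : Set ℝ} (hs : MeasurableSet s)
    (h : ¬IsMeagre s) : (interior (s + s)).Nonempty := by
  obtain ⟨u, huo, hsu⟩ := hs.residualEq_isOpen
  have hune : u.Nonempty := by
    by_contra! hu
    subst hu
    refine h ?_
    filter_upwards [eventuallyEq_set.1 hsu] with x hx hxs using hx.1 hxs
  obtain ⟨x, hx⟩ := hune
  refine ⟨x + x, mem_interior_iff_mem_nhds.2 ?_⟩
  have hcont : Tendsto (fun y : ℝ => y / 2) (𝓝 (x + x)) (𝓝 x) :=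
    (continuous_id.div_const 2).tendsto' _ _ (by simp)
  filter_upwards [hcont (huo.mem_nhds hx)] with y (hy : y / 2 ∈ u)
  have hrefl : Tendsto (fun z => y - z) (residual ℝ) (residual ℝ) :=
    tendsto_residual_of_isOpenMap (Homeomorph.subLeft y).continuous (Homeomorph.subLeft y).isOpenMap
  have hres : {z | (z ∈ s ↔ z ∈ u) ∧ (y - z ∈ s ↔ y - z ∈ u)} ∈ residual ℝ :=
    (eventuallyEq_set.1 hsu).and (hrefl.eventually (eventuallyEq_set.1 hsu))
  have hopen : IsOpen (u ∩ (fun z => y - z) ⁻¹' u) :=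
    huo.inter (huo.preimage (continuous_const.sub continuous_id))
  obtain ⟨z, ⟨hz, hyz⟩, hzs, hyzs⟩ := (dense_of_mem_residual hres).inter_open_nonempty _ hopen
    ⟨y / 2, hy, by simpa only [mem_preimage, sub_half] using hy⟩
  exact ⟨z, hzs.2 hz, y - z, hyzs.2 hyz, by simp⟩

/-- An additively closed set contains the positive integer multiples of its elements. -/
theorem natCast_mul_mem_of_add_mem {s : Set ℝ} (hadd : ∀ x ∈ s, ∀ y ∈ s, x + y ∈ s) {x : ℝ}
    (hx : x ∈ s) {n : ℕ} (hn : 1 ≤ n) : (n : ℝ) * x ∈ s := by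
  induction n, hn using Nat.le_induction with
  | base => simpa using hx
  | succ n _ ih => simpa [add_mul] using hadd _ ih _ hx

/-- If a set with nonempty interior is closed under addition and multiplication, then every
positive real has a positive integer multiple in it. -/
theorem exists_natCast_mul_mem {s : Set ℝ} (hadd : ∀ x ∈ s, ∀ y ∈ s, x + y ∈ s)
    (hmul : ∀ x ∈ s, ∀ y ∈ s, x * y ∈ s) (hs : (interior s).Nonempty) {x : ℝ} (hx : 0 < x) :
    ∃ n : ℕ, 1 ≤ n ∧ (n : ℝ) * x ∈ s := by
  obtain ⟨z, hz, hz0 : z ≠ 0⟩ :=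
    (dense_compl_singleton (0 : ℝ)).inter_open_nonempty _ isOpen_interior hs
  have hcont : Tendsto (fun q : ℝ => q * x / z) (𝓝 (z * z / x)) (𝓝 z) :=
    Continuous.tendsto' (by fun_prop) _ _ (by field_simp)
  have hpos : 0 < z * z / x := div_pos (mul_self_pos.2 hz0) hx
  obtain ⟨v, hv, hvo, hzv⟩ := mem_nhds_iff.1
    (inter_mem (hcont (isOpen_interior.mem_nhds hz)) (lt_mem_nhds hpos))
  obtain ⟨_, hqv, q, rfl⟩ := Rat.denseRange_cast (𝕜 := ℝ) |>.inter_open_nonempty v hvo ⟨_, hzv⟩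
  obtain ⟨hqs, hq0 : (0 : ℝ) < q⟩ := hv hqv
  have hq : 0 < q := by exact_mod_cast hq0
  have hnum : 0 < q.num := Rat.num_pos.2 hq
  have hmem : (q : ℝ) * x ∈ s := by
    have := hmul _ (interior_subset hz) _ (interior_subset hqs)
    rwa [mul_div_cancel₀ _ hz0] at this
  refine ⟨q.num.toNat, by omega, ?_⟩
  have hden := natCast_mul_mem_of_add_mem hadd hmem q.den_pos
  have hcast : ((q.num.toNat : ℕ) : ℝ) = q.den * (q : ℝ) := by
    have h1 : ((q.num.toNat : ℕ) : ℝ) = (q.num : ℝ) := by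
      exact_mod_cast Int.toNat_of_nonneg hnum.le
    rw [h1, mul_comm]
    exact_mod_cast (Rat.mul_den_eq_num q).symm
  rwa [hcast, mul_assoc]

/-- If `ℝ` is partitioned into nonempty Borel sets `B i`, each closed under both addition and
multiplication, then either every `B i` is Lebesgue null and meager, or some `B i₁ = ℝ`. -/
theorem stmt_9 {ι : Type*} (B : ι → Set ℝ)
    (hmeas : ∀ i, MeasurableSet (B i))
    (hne : ∀ i, (B i).Nonempty)
    (hdisj : Pairwise (Function.onFun Disjoint B))
    (hcover : (⋃ i, B i) = Set.univ)
    (hadd : ∀ i, ∀ x ∈ B i, ∀ y ∈ B i, x + y ∈ B i)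
    (hmul : ∀ i, ∀ x ∈ B i, ∀ y ∈ B i, x * y ∈ B i) :
    (∀ i, MeasureTheory.volume (B i) = 0 ∧ IsMeagre (B i)) ∨
      ∃ i₁, B i₁ = Set.univ := by
  refine or_iff_not_imp_left.2 fun hnot => ?_
  push Not at hnot
  obtain ⟨i, hi⟩ := hnot
  have hsum : (interior (B i + B i)).Nonempty := by
    by_cases h0 : volume (B i) = 0
    · exact interior_add_self_nonempty_of_not_isMeagre (hmeas i) (hi h0)
    · exact interior_add_self_nonempty_of_volume_ne_zero (hmeas i) h0
  have hint : (interior (B i)).Nonempty :=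
    hsum.mono (interior_mono (add_subset_iff.2 (hadd i)))
  have hne_zero : ∀ x : ℝ, x ≠ 0 → x ∈ B i := fun x hx => by
    obtain ⟨j, hj⟩ := mem_iUnion.1 (hcover ▸ mem_univ x)
    obtain ⟨n, hn, hmem⟩ :=
      exists_natCast_mul_mem (hadd i) (hmul i) hint (mul_self_pos.2 hx)
    have hmem' := natCast_mul_mem_of_add_mem (hadd j) (hmul j x hj x hj) hn
    obtain rfl : i = j := by
      by_contra hij
      exact disjoint_left.1 (hdisj hij) hmem hmem'
    exact hj
  refine ⟨i, eq_univ_of_forall fun x => ?_⟩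
  rcases eq_or_ne x 0 with rfl | hx
  · simpa using hadd i 1 (hne_zero 1 one_ne_zero) (-1) (hne_zero (-1) (by norm_num))
  · exact hne_zero x hx
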